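/- arXiv:2502.03768 — 2 statements merged into one kernel-verified Lean document; each statement's English description precedes it below -/
import Mathlib

section
/- Let 1 ≤ a < b ≤ N and 1 ≤ i ≤ N−1, and let ⟨ψ| = ⟨n_1,…,n_{a−1}, i−1, n_{a+1},…,n_{b−1}, i, n_{b+1},…,n_N| and ⟨s_iψ| = ⟨n_1,…,n_{a−1}, i, n_{a+1},…,n_{b−1}, i−1, n_{b+1},…,n_N| be dual natural basis vectors whose entries at positions a and b are (i−1, i) and (i, i−1) respectively, and whose remaining entries satisfy n_s < i−1 for all s ≠ a, b. Then (⟨s_iψ| + β ⟨ψ|) B_i(x) B_{i−1}(y) = ⟨ψ| B_{i−1}(x) B_i(y). -/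
noncomputable section
open scoped BigOperators

variable {F : Type*}

/-- `x ⊖ y := (x - y)/(1 + β·y)`. -/
def om [Field F] (β x y : F) : F := (x - y) / (1 + β * y)

/-- `⊖ t := -t/(1 + β·t)`. -/
def negOm [Field F] (β t : F) : F := (-t) / (1 + β * t)

/-- The R-matrix `R^{(n)}(x,y)` on `V ⊗ V`, `V = F^n`, with entries
`R_{ij,kl} = (1 + [k<l]·β(x⊖y)) δ_{il} δ_{jk} + [k>l]·(x⊖y) δ_{ik} δ_{jl}`;
the row index is the pair `(i,j)`, the column index is the pair `(k,l)`. -/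
def Rmat [Field F] (n : ℕ) (β x y : F) :
    Matrix (Fin n × Fin n) (Fin n × Fin n) F := Matrix.of fun p q =>
  (if p.1 = q.2 ∧ p.2 = q.1 then (if q.1 < q.2 then 1 + β * om β x y else 1) else 0) +
  (if p.1 = q.1 ∧ p.2 = q.2 ∧ q.2 < q.1 then om β x y else 0)

/-- `R_{a i}(u, τ)` : the R-matrix acting on the auxiliary space (first factor)
and the `i`-th site of `H = (F^n)^{⊗N}`, identity elsewhere. -/
def Rsite [Field F] (n N : ℕ) (β u τ : F) (i : Fin N) :
    Matrix (Fin n × (Fin N → Fin n)) (Fin n × (Fin N → Fin n)) F := Matrix.of fun p q =>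
  Rmat n β u τ (p.1, p.2 i) (q.1, q.2 i) *
    (if ∀ j, j ≠ i → p.2 j = q.2 j then 1 else 0)

/-- The monodromy matrix `T_a(u) = R_{aN}(u,t_N) ⋯ R_{a1}(u,t_1)` on `V_a ⊗ H`. -/
def Tmono [Field F] (n N : ℕ) (β u : F) (t : Fin N → F) :
    Matrix (Fin n × (Fin N → Fin n)) (Fin n × (Fin N → Fin n)) F :=
  ((List.ofFn fun i : Fin N => Rsite n N β u (t i) i).reverse).prod

/-- The block `T_a(u)_{r c}` (with respect to the auxiliary space) as an operator on `H`. -/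
def blockOp [Field F] (n N : ℕ) (β u : F) (t : Fin N → F) (r c : Fin n) :
    Matrix (Fin N → Fin n) (Fin N → Fin n) F :=
  Matrix.of fun s s' => Tmono n N β u t (r, s) (c, s')

/-- The natural basis vector `|n_1,…,n_N⟩` of `H` (also used as a dual basis covector). -/
def ket [Field F] (n N : ℕ) (g : Fin N → Fin n) : (Fin N → Fin n) → F :=
  fun s => if s = g then 1 else 0

/-!
An entry of a product of two blocks of the monodromy matrix is the `(r₁, r₂)` coordinate of an
ordered product of two-row Lax matrices, one per site, applied to the basis vector `e_(c₁, c₂)` of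
the two auxiliary spaces. Write `h = i - 1` and `H = i`, and apply the factors starting from site
`1`. The sites before `a` have colours below `h`, and multiply both `e_(H, h)` and `e_(h, H)` by one
and the same scalar. At site `a` a linear relation with coefficient `β` appears between the vectors
belonging to `s_iψ` and to `ψ`; the sites between `a` and `b`, of colour below `h`, preserve it. At
site `b` it turns into the asserted relation on all coordinates `(p, q)` with `p, q ≤ h`. The sites
after `b` compute these coordinates from one another alone, so the relation survives to the end.
-/

section General

open Matrix
open scoped Kronecker

variable {R : Type*} [CommSemiring R]

lemma kronecker_mulVec_apply {l m n o : Type*} [Fintype m] [Fintype o] (A : Matrix l m R)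
    (B : Matrix n o R) (f : m × o → R) (p : l) (q : n) :
    ((A ⊗ₖ B) *ᵥ f) (p, q) = (A *ᵥ fun p' => (B *ᵥ fun q' => f (p', q')) q) p := by
  simp only [mulVec, dotProduct, Fintype.sum_prod_type, kronecker_apply, Finset.mul_sum, mul_assoc]

lemma list_prod_map_kronecker {ι m n : Type*} [Fintype m] [DecidableEq m] [Fintype n]
    [DecidableEq n] (A : ι → Matrix m m R) (B : ι → Matrix n n R) (l : List ι) :
    (l.map fun i => A i ⊗ₖ B i).prod = (l.map A).prod ⊗ₖ (l.map B).prod := by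
  induction l with
  | nil => simp
  | cons i l ih => simp only [List.map_cons, List.prod_cons, ih, mul_kronecker_mul]

lemma sum_list_prod_map_finRange_reverse {S κ : Type*} [Semiring S] [Fintype κ] {N : ℕ}
    (A : Fin N → κ → S) :
    ∑ r : Fin N → κ, ((List.finRange N).reverse.map fun i => A i (r i)).prod =
      ((List.finRange N).reverse.map fun i => ∑ m, A i m).prod := by
  induction N with
  | zero => simp
  | succ N ih =>
    rw [← (Fin.consEquiv fun _ => κ).sum_comp, Fintype.sum_prod_type]
    simp [List.finRange_succ, Fin.consEquiv, Function.comp_def, ← ih, Finset.sum_mul_sum,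
      Finset.sum_comm (s := (Finset.univ : Finset κ)), ← List.map_reverse]

lemma exists_eq_append_of_pairwise_gt {α : Type*} [Preorder α] {l : List α}
    (hl : l.Pairwise (· > ·)) {a b : α} (ha : a ∈ l) (hb : b ∈ l) (hab : a < b) :
    ∃ l₁ l₂ l₃ : List α, l = l₁ ++ b :: (l₂ ++ a :: l₃) ∧
      ∀ j ∈ l₁ ++ l₂ ++ l₃, j ≠ a ∧ j ≠ b := by
  obtain ⟨l₁, l', rfl⟩ := List.append_of_mem hb
  have ha' : a ∈ l' := by
    rcases List.mem_append.mp ha with before | after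
    · exact absurd hab ((List.pairwise_append.mp hl).2.2 a before b List.mem_cons_self).not_gt
    · exact (List.mem_cons.mp after).resolve_left hab.ne
  obtain ⟨l₂, l₃, rfl⟩ := List.append_of_mem ha'
  simp only [List.pairwise_append, List.pairwise_cons, List.forall_mem_append,
    List.forall_mem_cons] at hl
  obtain ⟨-, ⟨⟨gt₂, -, gt₃⟩, -, ⟨lt₃, -⟩, lt₂⟩, lt₁⟩ := hl
  refine ⟨l₁, l₂, l₃, rfl, ?_⟩
  simp only [List.forall_mem_append]
  exact ⟨⟨fun j hj => ⟨(lt₁ j hj).2.2.1.ne', (lt₁ j hj).1.ne'⟩,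
    fun j hj => ⟨(lt₂ j hj).1.ne', (gt₂ j hj).ne⟩⟩, fun j hj => ⟨(lt₃ j hj).ne, (gt₃ j hj).ne⟩⟩

end General

section LaxMatrices

open Matrix
open scoped Kronecker

variable {R κ : Type*} [CommSemiring R] [LinearOrder κ]

/-- The weight with which an auxiliary line of colour `p` and a site of colour `k` exchange their
colours. -/
def swapWeight (β z : R) (p k : κ) : R := if k < p then 1 + β * z else 1

/-- The weight with which an auxiliary line of colour `p` and a site of colour `k` keep their
colours. -/
def stayWeight (z : R) (p k : κ) : R := if k < p then z else 0

/-- The Lax matrix: the matrix in the auxiliary indices obtained from the R-matrix by fixing the row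
index `k` and the column index `m` of the site. The parameter `z` stands for `u ⊖ τ`. -/
def laxMatrix (β z : R) (k m : κ) : Matrix κ κ R := of fun p p' =>
  (if p' = k ∧ m = p then swapWeight β z p k else 0) +
  (if p' = p ∧ m = k then stayWeight z p k else 0)

/-- The relation satisfied by the vectors which the two-row Lax matrices of the sites `1, …, c`,
`a ≤ c < b`, contribute to `⟨s_iψ| B_i B_{i-1}`, `⟨ψ| B_i B_{i-1}` and `⟨ψ| B_{i-1} B_i`
respectively, with `h = i - 1` and `H = i`. It concerns the entries at which one auxiliary line
carries the colour picked up at the site `b`, which is `h` for `s_iψ` and `H` for `ψ`. -/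
structure ExchangeInvariant (β : R) (h H : κ) (f₁ f₂ f₃ : κ × κ → R) : Prop where
  high_low : ∀ q ≤ h, f₁ (h, q) + β * f₂ (H, q) = f₃ (H, q)
  low_high : ∀ p < h, f₁ (p, h) + β * f₂ (p, H) = f₃ (p, H)
  low_low : ∀ p < h, ∀ q < h, f₁ (p, q) = 0 ∧ f₂ (p, q) = 0 ∧ f₃ (p, q) = 0

lemma ExchangeInvariant.smul {β : R} {h H : κ} {f₁ f₂ f₃ : κ × κ → R} (w : R)
    (hf : ExchangeInvariant β h H f₁ f₂ f₃) :
    ExchangeInvariant β h H (w • f₁) (w • f₂) (w • f₃) where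
  high_low q hq := by simp only [Pi.smul_apply, smul_eq_mul, ← hf.high_low q hq]; ring
  low_high p hp := by simp only [Pi.smul_apply, smul_eq_mul, ← hf.low_high p hp]; ring
  low_low p hp q hq := by simp [hf.low_low p hp q hq]

variable [Fintype κ]

/-- The Lax matrix of two superposed auxiliary lines crossing the same site: the first line turns
the site colour `k` into an intermediate colour, which the second line turns into `m`. -/
def twoRowLax (β x y : R) (k m : κ) : Matrix (κ × κ) (κ × κ) R :=
  ∑ j, laxMatrix β x k j ⊗ₖ laxMatrix β y j m

lemma laxMatrix_mulVec (β z : R) (k m : κ) (f : κ → R) (p : κ) :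
    (laxMatrix β z k m *ᵥ f) p =
      (if m = p then swapWeight β z p k * f k else 0) +
      (if m = k then stayWeight z p k * f p else 0) := by
  simp only [laxMatrix, mulVec, dotProduct, of_apply, add_mul, Finset.sum_add_distrib, ite_and,
    ite_mul, zero_mul, Finset.sum_ite_eq', Finset.mem_univ, if_true]

lemma twoRowLax_mulVec (β x y : R) (k m : κ) (f : κ × κ → R) (p q : κ) :
    (twoRowLax β x y k m *ᵥ f) (p, q) =
      (if m = q then swapWeight β x p k * swapWeight β y q p * f (k, p) else 0) +
      (if m = p then swapWeight β x p k * stayWeight y q p * f (k, q) else 0) +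
      (if m = q then stayWeight x p k * swapWeight β y q k * f (p, k) else 0) +
      (if m = k then stayWeight x p k * stayWeight y q k * f (p, q) else 0) := by
  simp only [twoRowLax, sum_mulVec, Finset.sum_apply, kronecker_mulVec_apply, laxMatrix_mulVec,
    Finset.sum_add_distrib, Finset.sum_ite_eq', Finset.mem_univ, if_true, mul_add, mul_ite,
    mul_zero, mul_assoc, add_assoc]

section Monodromy

variable {N : ℕ}

/-- The block `T_a(u)_{r c}` of the monodromy matrix as an ordered product of Lax matrices. The
parameter `z i` stands for `u ⊖ t_i`, and is arbitrary. -/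
def monodromyBlock (β : R) (z : Fin N → R) (r c : κ) : Matrix (Fin N → κ) (Fin N → κ) R :=
  of fun g s => ((List.finRange N).reverse.map fun i => laxMatrix β (z i) (g i) (s i)).prod r c

/-- The ordered product of the two-row Lax matrices over a list of sites, with site colours `g`
before and `s` after both rows. -/
def twoRowTransfer {ι : Type*} (β : R) (x y : ι → R) (g s : ι → κ) (l : List ι) :
    Matrix (κ × κ) (κ × κ) R :=
  (l.map fun i => twoRowLax β (x i) (y i) (g i) (s i)).prod

lemma monodromyBlock_mul_apply (β : R) (x y : Fin N → R) (r₁ c₁ r₂ c₂ : κ) (g s : Fin N → κ) :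
    (monodromyBlock β x r₁ c₁ * monodromyBlock β y r₂ c₂) g s =
      (twoRowTransfer β x y g s (List.finRange N).reverse *ᵥ Pi.single (c₁, c₂) 1) (r₁, r₂) := by
  simp only [twoRowTransfer, twoRowLax, mulVec_single_one, col_apply]
  rw [← sum_list_prod_map_finRange_reverse
    (fun i j => laxMatrix β (x i) (g i) j ⊗ₖ laxMatrix β (y i) j (s i))]
  simp only [list_prod_map_kronecker, Matrix.sum_apply, kronecker_apply, mul_apply,
    monodromyBlock, of_apply]

end Monodromy

section Exchange

variable {ι : Type*} {β : R} {h H : κ}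

lemma twoRowTransfer_append (x y : ι → R) (g s : ι → κ) (l l' : List ι) :
    twoRowTransfer β x y g s (l ++ l') =
      twoRowTransfer β x y g s l * twoRowTransfer β x y g s l' := by
  simp only [twoRowTransfer, List.map_append, List.prod_append]

lemma twoRowTransfer_cons (x y : ι → R) (g s : ι → κ) (i : ι) (l : List ι) :
    twoRowTransfer β x y g s (i :: l) =
      twoRowLax β (x i) (y i) (g i) (s i) * twoRowTransfer β x y g s l := by
  simp only [twoRowTransfer, List.map_cons, List.prod_cons]

lemma twoRowTransfer_congr (x y : ι → R) {g g' : ι → κ} (s : ι → κ) {l : List ι}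
    (hg : ∀ j ∈ l, g j = g' j) :
    twoRowTransfer β x y g s l = twoRowTransfer β x y g' s l := by
  unfold twoRowTransfer
  rw [List.map_congr_left fun j hj => by rw [hg j hj]]

lemma twoRowLax_mulVec_single (x y : R) {k : κ} (m : κ) {c₁ c₂ : κ} (h₁ : k < c₁) (h₂ : k < c₂) :
    twoRowLax β x y k m *ᵥ Pi.single (c₁, c₂) 1 =
      (if m = k then x * y else 0) • Pi.single (c₁, c₂) 1 := by
  ext ⟨p, q⟩
  rw [twoRowLax_mulVec]
  by_cases hp : p = c₁ <;> by_cases hq : q = c₂ <;>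
    simp [hp, hq, h₁, h₂, h₁.ne, h₂.ne, stayWeight]

lemma twoRowTransfer_mulVec_single (x y : ι → R) {g : ι → κ} (s : ι → κ) {l : List ι} {c₁ c₂ : κ}
    (h₁ : ∀ j ∈ l, g j < c₁) (h₂ : ∀ j ∈ l, g j < c₂) :
    twoRowTransfer β x y g s l *ᵥ Pi.single (c₁, c₂) 1 =
      (l.map fun j => if s j = g j then x j * y j else 0).prod • Pi.single (c₁, c₂) 1 := by
  induction l with
  | nil => simp only [twoRowTransfer, List.map_nil, List.prod_nil, one_mulVec, one_smul]
  | cons i l ih =>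
    rw [List.forall_mem_cons] at h₁ h₂
    rw [twoRowTransfer_cons, ← mulVec_mulVec, ih h₁.2 h₂.2, mulVec_smul,
      twoRowLax_mulVec_single _ _ _ h₁.1 h₂.1, smul_smul, mul_comm, List.map_cons, List.prod_cons]

namespace ExchangeInvariant

lemma of_twoRowLax_single (x y : R) (hH : h < H) (m : κ) :
    ExchangeInvariant β h H (twoRowLax β x y H m *ᵥ Pi.single (H, h) 1)
      (twoRowLax β x y h m *ᵥ Pi.single (H, h) 1) (twoRowLax β x y h m *ᵥ Pi.single (h, H) 1) where
  high_low q hq := by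
    simp only [twoRowLax_mulVec, swapWeight, stayWeight, Pi.single_apply, Prod.mk.injEq, hH, hH.ne,
      hH.ne', hH.not_gt, hq.not_gt, (hq.trans_lt hH).ne, (hq.trans_lt hH).not_gt, ↓reduceIte,
      true_and, false_and, and_false, and_self, mul_ite, mul_one, mul_zero, ite_self, add_zero,
      zero_add]
    split_ifs <;> ring
  low_high p hp := by
    simp [twoRowLax_mulVec, swapWeight, stayWeight, hH, hH.ne, hH.ne',
      hH.not_gt, hp, hp.ne, hp.not_gt, hp.trans hH, (hp.trans hH).ne, (hp.trans hH).not_gt]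
  low_low p hp q hq := by
    simp [twoRowLax_mulVec, hH.ne, hH.ne', hp.ne, hq.ne, (hp.trans hH).ne,
      (hq.trans hH).ne]

variable {f₁ f₂ f₃ : κ × κ → R}

lemma mulVec_twoRowLax (x y : R) (hH : h < H) {k : κ} (hk : k < h) (m : κ)
    (hf : ExchangeInvariant β h H f₁ f₂ f₃) :
    ExchangeInvariant β h H (twoRowLax β x y k m *ᵥ f₁) (twoRowLax β x y k m *ᵥ f₂)
      (twoRowLax β x y k m *ᵥ f₃) where
  high_low q hq := by
    simp only [twoRowLax_mulVec, ← hf.high_low q hq, ← hf.high_low k hk.le,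
      ← hf.low_high k hk, swapWeight, stayWeight, hk, hk.trans hH, hq.not_gt,
      (hq.trans_lt hH).not_gt, if_true, if_false]
    split_ifs <;> ring
  low_high p hp := by
    simp only [twoRowLax_mulVec, ← hf.low_high p hp, ← hf.low_high k hk,
      hf.low_low k hk p hp, hf.low_low p hp k hk, swapWeight, stayWeight, hk, hk.trans hH, hp,
      hp.trans hH, if_true]
    split_ifs <;> ring
  low_low p hp q hq := by
    simp [twoRowLax_mulVec, hf.low_low k hk p hp, hf.low_low k hk q hq,
      hf.low_low p hp k hk, hf.low_low p hp q hq]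

lemma mulVec_twoRowTransfer (x y : ι → R) (hH : h < H) {g : ι → κ} (s : ι → κ) {l : List ι}
    (hl : ∀ j ∈ l, g j < h) (hf : ExchangeInvariant β h H f₁ f₂ f₃) :
    ExchangeInvariant β h H (twoRowTransfer β x y g s l *ᵥ f₁)
      (twoRowTransfer β x y g s l *ᵥ f₂) (twoRowTransfer β x y g s l *ᵥ f₃) := by
  induction l with
  | nil => simpa [twoRowTransfer] using hf
  | cons i l ih =>
    rw [List.forall_mem_cons] at hl
    simp only [twoRowTransfer_cons, ← mulVec_mulVec]
    exact (ih hl.2).mulVec_twoRowLax _ _ hH hl.1 _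

lemma twoRowLax_add_eq (x y : R) (hH : h < H) (m : κ) (hf : ExchangeInvariant β h H f₁ f₂ f₃)
    {p q : κ} (hp : p ≤ h) (hq : q ≤ h) :
    (twoRowLax β x y h m *ᵥ f₁ + β • (twoRowLax β x y H m *ᵥ f₂)) (p, q) =
      (twoRowLax β x y H m *ᵥ f₃) (p, q) := by
  simp only [Pi.add_apply, Pi.smul_apply, smul_eq_mul, twoRowLax_mulVec, ← hf.high_low p hp,
    ← hf.high_low q hq, swapWeight, stayWeight, hp.not_gt, (hp.trans_lt hH).not_gt, if_false]
  split_ifs <;> ring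

end ExchangeInvariant

lemma twoRowTransfer_mulVec_congr_of_le (x y : ι → R) {g : ι → κ} (s : ι → κ) {l : List ι}
    (hl : ∀ j ∈ l, g j ≤ h) {f f' : κ × κ → R}
    (hf : ∀ p ≤ h, ∀ q ≤ h, f (p, q) = f' (p, q)) {p q : κ} (hp : p ≤ h) (hq : q ≤ h) :
    (twoRowTransfer β x y g s l *ᵥ f) (p, q) = (twoRowTransfer β x y g s l *ᵥ f') (p, q) := by
  induction l generalizing p q with
  | nil => simpa [twoRowTransfer] using hf p hp q hq
  | cons i l ih =>
    rw [List.forall_mem_cons] at hl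
    simp only [twoRowTransfer_cons, ← mulVec_mulVec, twoRowLax_mulVec, ih hl.2 hl.1 hp,
      ih hl.2 hl.1 hq, ih hl.2 hp hl.1, ih hl.2 hp hq]

lemma exchangeInvariant_twoRowTransfer_single (x y : ι → R) (hH : h < H) {a : ι} {g g' : ι → κ}
    (s : ι → κ) {l l' : List ι} (hga : g a = h) (hga' : g' a = H) (low : ∀ j ∈ l, g j < h)
    (low' : ∀ j ∈ l', g j < h) (hg : ∀ j ∈ l, g' j = g j) (hg' : ∀ j ∈ l', g' j = g j) :
    ExchangeInvariant β h H (twoRowTransfer β x y g' s (l ++ a :: l') *ᵥ Pi.single (H, h) 1)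
      (twoRowTransfer β x y g s (l ++ a :: l') *ᵥ Pi.single (H, h) 1)
      (twoRowTransfer β x y g s (l ++ a :: l') *ᵥ Pi.single (h, H) 1) := by
  have low_H : ∀ j ∈ l', g j < H := fun j hj => (low' j hj).trans hH
  simp only [twoRowTransfer_append, twoRowTransfer_cons, ← mulVec_mulVec, hga, hga',
    twoRowTransfer_congr x y s hg, twoRowTransfer_congr x y s hg',
    twoRowTransfer_mulVec_single x y s low' low_H, twoRowTransfer_mulVec_single x y s low_H low',
    mulVec_smul (twoRowLax _ _ _ _ _)]
  exact ((ExchangeInvariant.of_twoRowLax_single _ _ hH _).smul _).mulVec_twoRowTransfer x y hH s low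

lemma twoRowTransfer_exchange (x y : ι → R) (hH : h < H) {a b : ι} {g g' : ι → κ} (s : ι → κ)
    {l₁ l₂ l₃ : List ι} (hga : g a = h) (hgb : g b = H) (hga' : g' a = H) (hgb' : g' b = h)
    (hlow : ∀ j ∈ l₁ ++ l₂ ++ l₃, g j < h) (hg' : ∀ j ∈ l₁ ++ l₂ ++ l₃, g' j = g j)
    {p q : κ} (hp : p ≤ h) (hq : q ≤ h) :
    (twoRowTransfer β x y g' s (l₁ ++ b :: (l₂ ++ a :: l₃)) *ᵥ Pi.single (H, h) 1 +
        β • (twoRowTransfer β x y g s (l₁ ++ b :: (l₂ ++ a :: l₃)) *ᵥ Pi.single (H, h) 1)) (p, q) =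
      (twoRowTransfer β x y g s (l₁ ++ b :: (l₂ ++ a :: l₃)) *ᵥ Pi.single (h, H) 1) (p, q) := by
  simp only [List.forall_mem_append] at hlow hg'
  obtain ⟨⟨low₁, low₂⟩, low₃⟩ := hlow
  obtain ⟨⟨hg₁, hg₂⟩, hg₃⟩ := hg'
  have between :=
    exchangeInvariant_twoRowTransfer_single (β := β) x y hH s hga hga' low₂ low₃ hg₂ hg₃
  rw [twoRowTransfer_append, twoRowTransfer_append, twoRowTransfer_congr x y s hg₁,
    twoRowTransfer_cons, twoRowTransfer_cons, hgb, hgb']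
  simp only [← mulVec_mulVec _ (twoRowTransfer β x y g s l₁), ← mulVec_smul, ← mulVec_add]
  refine twoRowTransfer_mulVec_congr_of_le x y s (fun j hj => (low₁ j hj).le) ?_ hp hq
  intro p hp q hq
  simp only [← mulVec_mulVec, mulVec_smul]
  exact between.twoRowLax_add_eq _ _ hH _ hp hq

end Exchange

theorem exchange_relation_general {N : ℕ} (β : R) (x y : Fin N → R) {a b : Fin N} (hab : a < b)
    {h H r₁ r₂ : κ} (hH : h < H) (hr₁ : r₁ ≤ h) (hr₂ : r₂ ≤ h) {g : Fin N → κ} (hga : g a = h)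
    (hgb : g b = H) (hlow : ∀ s, s ≠ a → s ≠ b → g s < h) :
    (Pi.single (Function.update (Function.update g a H) b h) 1 + β • Pi.single g 1) ᵥ*
        (monodromyBlock β x r₁ H * monodromyBlock β y r₂ h) =
      Pi.single g 1 ᵥ* (monodromyBlock β x r₁ h * monodromyBlock β y r₂ H) := by
  have decreasing : (List.finRange N).reverse.Pairwise (· > ·) :=
    List.pairwise_reverse.mpr (List.pairwise_lt_finRange N)
  obtain ⟨l₁, l₂, l₃, hl, hne⟩ :=
    exists_eq_append_of_pairwise_gt decreasing (by simp) (by simp) hab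
  ext s
  simp only [add_vecMul, smul_vecMul, single_one_vecMul, Pi.add_apply, Pi.smul_apply, row_apply,
    monodromyBlock_mul_apply, hl]
  refine twoRowTransfer_exchange x y hH s hga hgb ?_ ?_ (fun j hj => ?_) (fun j hj => ?_) hr₁ hr₂
  · rw [Function.update_of_ne hab.ne, Function.update_self]
  · rw [Function.update_self]
  · exact hlow j (hne j hj).1 (hne j hj).2
  · rw [Function.update_of_ne (hne j hj).2, Function.update_of_ne (hne j hj).1]

end LaxMatrices

section Specialization

variable [Field F] {n N : ℕ}

lemma ket_eq_single (g : Fin N → Fin n) : ket (F := F) n N g = Pi.single g 1 := by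
  ext s
  rw [ket, Pi.single_apply]

lemma Rmat_apply_eq_laxMatrix (β u τ : F) (p k p' m : Fin n) :
    Rmat n β u τ (p, k) (p', m) = laxMatrix β (om β u τ) k m p p' := by
  simp only [Rmat, laxMatrix, swapWeight, stayWeight, Matrix.of_apply]
  grind

lemma Rsite_mul_apply (β u τ : F) (i : Fin N)
    (A : Matrix (Fin n × (Fin N → Fin n)) (Fin n × (Fin N → Fin n)) F)
    (p : Fin n) (g : Fin N → Fin n) (z : Fin n × (Fin N → Fin n)) :
    (Rsite n N β u τ i * A) (p, g) z =
      ∑ q, ∑ m, laxMatrix β (om β u τ) (g i) m p q * A (q, Function.update g i m) z := by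
  rw [Matrix.mul_apply, Fintype.sum_prod_type]
  refine Finset.sum_congr rfl fun q _ => Eq.symm <|
    Fintype.sum_of_injective _ (Function.update_injective g i) _ _ (fun r hr => ?_) fun m => ?_
  · have differ : ¬∀ j, j ≠ i → g j = r j := fun agree =>
      hr ⟨r i, Function.update_eq_iff.mpr ⟨rfl, agree⟩⟩
    simp only [Rsite, Matrix.of_apply, if_neg differ, mul_zero, zero_mul]
  · have agree : ∀ j, j ≠ i → g j = Function.update g i m j := fun j hj =>
      (Function.update_of_ne hj m g).symm
    simp only [Rsite, Matrix.of_apply, if_pos agree, mul_one, Rmat_apply_eq_laxMatrix,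
      Function.update_self]

lemma list_prod_Rsite_apply (β u : F) (t : Fin N → F) {l : List (Fin N)} (hl : l.Nodup)
    (p c : Fin n) (g s : Fin N → Fin n) :
    (l.map fun i => Rsite n N β u (t i) i).prod (p, g) (c, s) =
      if ∀ j ∉ l, g j = s j then
        (l.map fun i => laxMatrix β (om β u (t i)) (g i) (s i)).prod p c else 0 := by
  induction l generalizing p g with
  | nil => simp [Matrix.one_apply, ← funext_iff, and_comm (a := p = c), ite_and]
  | cons i l ih =>
    obtain ⟨hi, hl⟩ := List.nodup_cons.mp hl
    have agree_iff (m : Fin n) : (∀ j ∉ l, Function.update g i m j = s j) ↔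
        m = s i ∧ ∀ j ∉ i :: l, g j = s j := by
      grind
    have prod_update (m : Fin n) :
        (l.map fun j => laxMatrix β (om β u (t j)) (Function.update g i m j) (s j)) =
          l.map fun j => laxMatrix β (om β u (t j)) (g j) (s j) :=
      List.map_congr_left fun j hj => by rw [Function.update_of_ne (ne_of_mem_of_not_mem hj hi)]
    rw [List.map_cons, List.prod_cons, Rsite_mul_apply, List.map_cons, List.prod_cons,
      Matrix.mul_apply]
    simp only [ih hl, agree_iff, prod_update, ite_and, mul_ite, mul_zero, Finset.sum_ite_eq',
      Finset.mem_univ, if_true, Finset.sum_ite_irrel, Finset.sum_const_zero]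

lemma blockOp_eq_monodromyBlock (β u : F) (t : Fin N → F) (r c : Fin n) :
    blockOp n N β u t r c = monodromyBlock β (fun i => om β u (t i)) r c := by
  ext g s
  rw [blockOp, monodromyBlock, Matrix.of_apply, Matrix.of_apply, Tmono, List.ofFn_eq_map,
    ← List.map_reverse,
    list_prod_Rsite_apply β u t (List.nodup_reverse.mpr (List.nodup_finRange N)),
    if_pos fun j hj => absurd (List.mem_reverse.mpr (List.mem_finRange j)) hj]

end Specialization

/-- **Lemma `l3pre`**: with `n = N = M+2`, `1 ≤ i ≤ N-1` (`i = ii+1`), let `⟨ψ|`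
have entry `i-1` at position `a`, entry `i` at position `b > a`, and all other
entries `< i-1`, and let `⟨s_iψ|` be obtained by exchanging those two entries.
Then `(⟨s_iψ| + β ⟨ψ|) B_i(x) B_{i-1}(y) = ⟨ψ| B_{i-1}(x) B_i(y)`
(with `B_0 = A`). -/
theorem exchange_relation [Field F] [CharZero F] (M : ℕ) (β x y : F)
    (t : Fin (M + 2) → F)
    (hind : AlgebraicIndependent ℚ (Sum.elim ![β, x, y] t))
    (a b : Fin (M + 2)) (hab : a < b) (ii : Fin (M + 1))
    (g : Fin (M + 2) → Fin (M + 2))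
    (hga : g a = ii.castSucc) (hgb : g b = ii.succ)
    (hother : ∀ s, s ≠ a → s ≠ b → (g s : ℕ) < (ii : ℕ)) :
    Matrix.vecMul
        (ket (M + 2) (M + 2) (Function.update (Function.update g a ii.succ) b ii.castSucc) +
          β • ket (M + 2) (M + 2) g)
        (blockOp (M + 2) (M + 2) β x t 0 ii.succ *
          blockOp (M + 2) (M + 2) β y t 0 ii.castSucc) =
      Matrix.vecMul (ket (M + 2) (M + 2) g)
        (blockOp (M + 2) (M + 2) β x t 0 ii.castSucc *
          blockOp (M + 2) (M + 2) β y t 0 ii.succ) := by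
  simp only [ket_eq_single, blockOp_eq_monodromyBlock]
  exact exchange_relation_general β _ _ hab Fin.castSucc_lt_succ (Fin.zero_le _) (Fin.zero_le _)
    hga hgb hother
end
end

section
/- Let π ∈ S_N and 1 ≤ i ≤ N−1 with ℓ(s_i π) > ℓ(π). Then (⟨s_iπ| + β ⟨π|) B_{N−1}(σ_1) B_{N−2}(σ_2) ⋯ B_{i+1}(σ_{N−i−1}) B_i(σ_{N−i}) B_{i−1}(σ_{N−i+1}) = ⟨π| B_{N−1}(σ_1) B_{N−2}(σ_2) ⋯ B_{i+1}(σ_{N−i−1}) B_{i−1}(σ_{N−i}) B_i(σ_{N−i+1}), where the products run over consecutive descending indices N−1, N−2, …, i+1 followed by the indicated last two factors. -/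
noncomputable section
open scoped BigOperators

variable {F : Type*}

/-- The Coxeter length of a permutation: its number of inversions. -/
def permLength {N : ℕ} (w : Equiv.Perm (Fin N)) : ℕ :=
  (Finset.univ.filter fun p : Fin N × Fin N => p.1 < p.2 ∧ w p.2 < w p.1).card

/-- The longest permutation `ω_N : i ↦ N - 1 - i`. -/
def omegaPerm (N : ℕ) : Equiv.Perm (Fin N) :=
  ⟨Fin.rev, Fin.rev, fun i => Fin.rev_rev i, fun i => Fin.rev_rev i⟩

/-- The product `B_{N-1}(σ_1) B_{N-2}(σ_2) ⋯` of `c` consecutive descending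
B-operators (`n = N = M+2`). -/
def topString [Field F] (M : ℕ) (β : F) (t : Fin (M + 2) → F) (σ : Fin (M + 2) → F)
    (c : ℕ) (hc : c ≤ M + 1) :
    Matrix (Fin (M + 2) → Fin (M + 2)) (Fin (M + 2) → Fin (M + 2)) F :=
  (List.ofFn fun a : Fin c =>
      blockOp (M + 2) (M + 2) β (σ ⟨a, by have := a.isLt; omega⟩) t 0
        ⟨M + 1 - (a : ℕ), by omega⟩).prod

/-!
The matrix `R_{ai}` with the auxiliary letter threaded through the chain becomes `1 + x·T_j`, where
`T_j` is a generator of the 0-Hecke algebra (`T_j² = β T_j`) acting on two neighbouring places of a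
word. Hence `⟨w| B_{c₁}(u₁) ⋯ B_{c_m}(u_m) |s⟩` is the coefficient with which the word
`c₁ … c_m s` arises from `w 0 … 0` under a product of such operators, all acting on places.

Exchanging two letters `a ⋖ b` commutes with the action on places: if `a` stands before `b` in `w`,
then `⟨w'| + β⟨w|`, with `w'` obtained from `w` by swapping the two letters, is the image of `⟨w|`
under a 0-Hecke generator acting on letters. The letter `0` is repeated in `w 0 … 0`, so this
generator is set up to act on `b` and the first `a`; it still commutes with the places action, since
a pair `b … a` is never turned into `a … b` and so at most one `a` ever stands before `b`. Comparing
the coefficients of `… b a s` and `… a b s` gives the claim.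
-/

theorem swap_lt_swap_iff_of_covBy {α : Type*} [LinearOrder α] {a b c d : α} (hab : a ⋖ b)
    (h : ¬(c = a ∧ d = b)) (h' : ¬(c = b ∧ d = a)) :
    Equiv.swap a b c < Equiv.swap a b d ↔ c < d := by
  have hlt := hab.lt
  have hle : ∀ e, e < b → e ≤ a := fun e he => hab.le_of_lt he
  have hge : ∀ e, a < e → b ≤ e := fun e he => hab.ge_of_gt he
  simp only [Equiv.swap_apply_def]
  grind

theorem swap_succ_lt_swap_succ {j p q : ℕ} (hpq : p < q) (h : ¬(p = j ∧ q = j + 1)) :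
    Equiv.swap j (j + 1) p < Equiv.swap j (j + 1) q :=
  (swap_lt_swap_iff_of_covBy (Order.covBy_add_one j) h (by omega)).2 hpq

theorem comp_swap_comp_swap {ι α : Type*} [DecidableEq ι] (g : ι → α) (i j : ι) :
    (g ∘ Equiv.swap i j) ∘ Equiv.swap i j = g := by
  funext k
  simp

theorem comp_swap_eq_iff_of_unique {ι α : Type*} [DecidableEq ι] {g : ι → α} {b : α} {q : ι}
    (hq : ∀ k, g k = b ↔ k = q) (i j k : ι) :
    (g ∘ Equiv.swap i j) k = b ↔ k = Equiv.swap i j q := by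
  rw [Function.comp_apply, hq, Equiv.swap_apply_eq_iff]

theorem symm_lt_symm_of_permLength_lt {N : ℕ} {a b : Fin N} (hab : a ⋖ b)
    {π : Equiv.Perm (Fin N)} (hlen : permLength π < permLength (Equiv.swap a b * π)) :
    π.symm a < π.symm b := by
  by_contra hba
  refine hlen.not_ge (Finset.card_le_card fun ⟨p, q⟩ hinv => ?_)
  rw [Finset.mem_filter_univ] at hinv ⊢
  obtain ⟨hpq, hlt⟩ := hinv
  refine ⟨hpq, (swap_lt_swap_iff_of_covBy hab ?_ ?_).1 hlt⟩
  · rintro ⟨hqa, hpb⟩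
    exact hab.lt.asymm (by simpa [hqa, hpb] using hlt)
  · rintro ⟨hqb, hpa⟩
    exact hba (by simpa [← hqb, ← hpa] using hpq)

theorem one_add_mul_ne_zero_of_algebraicIndependent {ι K A : Type*} [CommRing K] [Nontrivial K]
    [CommRing A] [Algebra K A] {x : ι → A} (hx : AlgebraicIndependent K x) (i j : ι) :
    1 + x i * x j ≠ 0 := by
  intro h
  have hpoly : (1 + MvPolynomial.X i * MvPolynomial.X j : MvPolynomial ι K) = 0 :=
    hx.eq_zero_of_aeval_eq_zero _ (by simpa using h)
  simpa using congrArg MvPolynomial.constantCoeff hpoly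

/-- The words whose letters from place `K` on are all `0`. -/
def zeroTailWords (α : Type*) [Zero α] (K : ℕ) : Set (ℕ → α) := {g | ∀ p, K ≤ p → g p = 0}

theorem zeroTailWords_mono {α : Type*} [Zero α] {K L : ℕ} (h : K ≤ L) :
    zeroTailWords α K ⊆ zeroTailWords α L :=
  fun _ hg p hp => hg p (h.trans hp)

section HeckeAction

variable {R α : Type*} [CommRing R] [LinearOrder α]

/-- The operator `1 + x·T_j` on covectors indexed by infinite words, `T_j` being the 0-Hecke
generator (`T_j² = β T_j`) acting on the places `j` and `j + 1` of a word. -/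
def heckeStep (β x : R) (j : ℕ) (Ψ : (ℕ → α) → R) : (ℕ → α) → R := fun g =>
  Ψ g * (if g j < g (j + 1) then 1 + β * x else 1) +
    if g (j + 1) < g j then x * Ψ (g ∘ Equiv.swap j (j + 1)) else 0

/-- The action of one monodromy matrix: `heckeStep` at the places `m + N - 1`, …, `m + 1`, `m`, in
this order, with the weight `x i` at place `m + i`. -/
def heckeRow (β : R) (m : ℕ) : (N : ℕ) → (Fin N → R) → ((ℕ → α) → R) → (ℕ → α) → R
  | 0, _, Ψ => Ψ
  | N + 1, x, Ψ =>
    heckeRow β m N (fun i => x i.castSucc) (heckeStep β (x (Fin.last N)) (m + N) Ψ)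

/-- The action of `m` successive monodromy matrices, the `k`-th one by `heckeRow` at offset `k`
with the weights `x k`. -/
def heckeRows (β : R) {N : ℕ} : (m : ℕ) → (Fin m → Fin N → R) → ((ℕ → α) → R) → (ℕ → α) → R
  | 0, _, Ψ => Ψ
  | m + 1, x, Ψ =>
    heckeRow β m N (x (Fin.last m)) (heckeRows β m (fun k => x k.castSucc) Ψ)

theorem heckeRow_rel {P : ((ℕ → α) → R) → ((ℕ → α) → R) → Prop} {β : R}
    (hP : ∀ x j A B, P A B → P (heckeStep β x j A) (heckeStep β x j B)) (m : ℕ) {N : ℕ}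
    (x : Fin N → R) {A B : (ℕ → α) → R} (h : P A B) :
    P (heckeRow β m N x A) (heckeRow β m N x B) := by
  induction N generalizing A B with
  | zero => exact h
  | succ N ih => exact ih _ (hP _ _ _ _ h)

theorem heckeRows_rel {P : ((ℕ → α) → R) → ((ℕ → α) → R) → Prop} {β : R}
    (hP : ∀ x j A B, P A B → P (heckeStep β x j A) (heckeStep β x j B)) {m N : ℕ}
    (x : Fin m → Fin N → R) {A B : (ℕ → α) → R} (h : P A B) :
    P (heckeRows β m x A) (heckeRows β m x B) := by
  induction m with
  | zero => exact h
  | succ m ih => exact heckeRow_rel hP m _ (ih _)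

theorem support_heckeStep_subset {S : Set (ℕ → α)} {j : ℕ}
    (hS : ∀ g, g (j + 1) < g j → g ∘ Equiv.swap j (j + 1) ∈ S → g ∈ S) (β x : R)
    {Ψ : (ℕ → α) → R} (hΨ : Function.support Ψ ⊆ S) :
    Function.support (heckeStep β x j Ψ) ⊆ S := by
  rw [Function.support_subset_iff'] at hΨ ⊢
  intro g hg
  have hswap : g (j + 1) < g j → Ψ (g ∘ Equiv.swap j (j + 1)) = 0 := fun hlt =>
    hΨ _ fun hmem => hg (hS g hlt hmem)
  simp +contextual [heckeStep, hΨ g hg, hswap]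

section Tail

variable [Zero α]

theorem support_heckeRow_subset_zeroTailWords (β : R) {m N K : ℕ} (hK : m + N < K)
    (x : Fin N → R) {Ψ : (ℕ → α) → R} (hΨ : Function.support Ψ ⊆ zeroTailWords α K) :
    Function.support (heckeRow β m N x Ψ) ⊆ zeroTailWords α K := by
  induction N generalizing Ψ with
  | zero => exact hΨ
  | succ N ih =>
    refine ih (by omega) _ (support_heckeStep_subset (fun g _ hg p hp => ?_) β _ hΨ)
    rw [← hg p hp, Function.comp_apply, Equiv.swap_apply_of_ne_of_ne (by omega) (by omega)]

theorem support_heckeRows_subset_zeroTailWords (β : R) {m N : ℕ} (x : Fin m → Fin N → R)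
    {Ψ : (ℕ → α) → R} (hΨ : Function.support Ψ ⊆ zeroTailWords α N) :
    Function.support (heckeRows β m x Ψ) ⊆ zeroTailWords α (m + N) := by
  induction m with
  | zero => simpa [heckeRows] using hΨ
  | succ m ih =>
    exact support_heckeRow_subset_zeroTailWords β (by omega) _
      ((ih _).trans (zeroTailWords_mono (by omega)))

end Tail

end HeckeAction

section LetterExchange

variable {R α : Type*} [CommRing R]

/-- The words in which `b` occurs exactly once and `a` at most once before `b`. -/
def exchangeWords (a b : α) : Set (ℕ → α) :=
  {g | ∃ q, (∀ k, g k = b ↔ k = q) ∧ {k | k < q ∧ g k = a}.Subsingleton}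

/-- `B` is the image of `A` under the 0-Hecke generator of the letters `a` and `b`, acting on a word
through the occurrence of `b`, at place `q`, and the first occurrence of `a`, at place `p`. -/
structure HeckeRelated (β : R) (a b : α) (A B : (ℕ → α) → R) : Prop where
  support_left : Function.support A ⊆ exchangeWords a b
  support_right : Function.support B ⊆ exchangeWords a b
  eq_mul {g : ℕ → α} {p q : ℕ} :
    IsLeast {k | g k = a} p → (∀ k, g k = b ↔ k = q) → p < q → B g = β * A g
  eq_swap {g : ℕ → α} {p q : ℕ} :
    IsLeast {k | g k = a} p → (∀ k, g k = b ↔ k = q) → q < p → B g = A (g ∘ Equiv.swap p q)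

theorem eq_comp_swap_iff_of_unique {a b : α} {w g : ℕ → α} {P Q p q : ℕ}
    (hPQ : P < Q) (hP : ∀ k < Q, w k = a ↔ k = P) (hQ : ∀ k, w k = b ↔ k = Q)
    (hp : IsLeast {k | g k = a} p) (hq : ∀ k, g k = b ↔ k = q) (hqp : q < p) :
    g = w ∘ Equiv.swap P Q ↔ g ∘ Equiv.swap p q = w := by
  have hPa : w P = a := (hP P hPQ).2 rfl
  have hQb : w Q = b := (hQ Q).2 rfl
  constructor
  · rintro rfl
    obtain rfl : P = q := (hq P).1 (by simpa using hQb)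
    have hpQ : p ≤ Q := hp.2 (show w (Equiv.swap P Q Q) = a by simpa using hPa)
    obtain rfl : p = Q := by
      by_contra hne
      have hpa : w (Equiv.swap P Q p) = a := hp.1
      rw [Equiv.swap_apply_of_ne_of_ne hqp.ne' hne] at hpa
      exact hqp.ne' ((hP p (by omega)).1 hpa)
    rw [Equiv.swap_comm p, comp_swap_comp_swap]
  · intro h
    have hwp : w p = b := by simpa [← h] using (hq q).2 rfl
    have hwq : w q = a := by simpa [← h] using hp.1
    obtain rfl : p = Q := (hQ p).1 hwp
    obtain rfl : q = P := (hP q hqp).1 hwq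
    rw [← h, Equiv.swap_comm p, comp_swap_comp_swap]

theorem HeckeRelated.indicator (β : R) {a b : α} {w : ℕ → α} {P Q : ℕ} (hPQ : P < Q)
    (hP : ∀ k < Q, w k = a ↔ k = P) (hQ : ∀ k, w k = b ↔ k = Q) :
    HeckeRelated β a b (Set.indicator {w} 1)
      (Set.indicator {w ∘ Equiv.swap P Q} 1 + β • Set.indicator {w} 1) := by
  have hPa : w P = a := (hP P hPQ).2 rfl
  have hw : w ∈ exchangeWords a b :=
    ⟨Q, hQ, fun k ⟨hk, hka⟩ l ⟨hl, hla⟩ => ((hP k hk).1 hka).trans ((hP l hl).1 hla).symm⟩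
  have hw' : w ∘ Equiv.swap P Q ∈ exchangeWords a b := by
    refine ⟨P, by simpa using comp_swap_eq_iff_of_unique hQ P Q, fun k ⟨hk, hka⟩ => ?_⟩
    rw [Function.comp_apply, Equiv.swap_apply_of_ne_of_ne hk.ne (hk.trans hPQ).ne] at hka
    exact absurd ((hP k (hk.trans hPQ)).1 hka) hk.ne
  refine ⟨?_, ?_, fun {g p q} hp hq hpq => ?_, fun {g p q} hp hq hqp => ?_⟩
  · exact Set.support_indicator_subset.trans (Set.singleton_subset_iff.2 hw)
  · rw [Function.support_subset_iff']
    intro g hg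
    have hgw : g ≠ w := fun h => hg (h ▸ hw)
    have hgw' : g ≠ w ∘ Equiv.swap P Q := fun h => hg (h ▸ hw')
    simp [hgw, hgw']
  · have hgw' : g ≠ w ∘ Equiv.swap P Q := by
      rintro rfl
      obtain rfl : P = q := (hq P).1 (by simpa using (hQ Q).2 rfl)
      have hpa : w (Equiv.swap P Q p) = a := hp.1
      rw [Equiv.swap_apply_of_ne_of_ne hpq.ne (hpq.trans hPQ).ne] at hpa
      exact hpq.ne ((hP p (hpq.trans hPQ)).1 hpa)
    simp [hgw']
  · have hgw : g ≠ w := by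
      rintro rfl
      have : Q = q := (hq Q).1 ((hQ Q).2 rfl)
      have : p ≤ P := hp.2 hPa
      omega
    classical
    simp only [Pi.add_apply, Pi.smul_apply, Set.indicator_apply, Set.mem_singleton_iff, hgw,
      eq_comp_swap_iff_of_unique hPQ hP hQ hp hq hqp, if_false, smul_zero, add_zero,
      Pi.one_apply]

theorem HeckeRelated.apply_eq_apply_comp_swap {β : R} {a b : α} {A B : (ℕ → α) → R}
    (h : HeckeRelated β a b A B) {g : ℕ → α} {m : ℕ}
    (hb : g m = b) (ha : IsLeast {k | g k = a} (m + 1)) :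
    B g = A (g ∘ Equiv.swap m (m + 1)) := by
  by_cases hq : ∀ k, g k = b ↔ k = m
  · rw [h.eq_swap ha hq (by omega), Equiv.swap_comm]
  have hunique : ∀ q, (∀ k, g k = b ↔ k = q) → q = m := fun q h => ((h m).1 hb).symm
  rw [Function.support_subset_iff'.1 h.support_right g ?_,
    Function.support_subset_iff'.1 h.support_left _ ?_]
  · rintro ⟨q, hq', -⟩
    have hq'' : ∀ k, g k = b ↔ k = Equiv.swap m (m + 1) q := fun k => by
      simpa only [comp_swap_comp_swap] using comp_swap_eq_iff_of_unique hq' m (m + 1) k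
    exact hq (hunique _ hq'' ▸ hq'')
  · rintro ⟨q, hq', -⟩
    exact hq (hunique q hq' ▸ hq')

theorem isLeast_comp_swap_succ {g : ℕ → α} {a : α} {p j : ℕ}
    (hp : IsLeast {k | g k = a} p) (hj : g j ≠ g (j + 1)) :
    IsLeast {k | (g ∘ Equiv.swap j (j + 1)) k = a} (Equiv.swap j (j + 1) p) := by
  have hpa : g p = a := hp.1
  refine ⟨by simpa using hpa, fun k hk => not_lt.1 fun hlt => ?_⟩
  replace hk : g (Equiv.swap j (j + 1) k) = a := hk
  have hle : p ≤ Equiv.swap j (j + 1) k := hp.2 hk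
  have := swap_succ_lt_swap_succ hlt (j := j) (by
    rintro ⟨rfl, h⟩
    obtain rfl : p = k := by simpa [Equiv.swap_apply_eq_iff] using h
    exact hj (by simpa [hpa] using hk.symm))
  rw [Equiv.swap_apply_self] at this
  omega

theorem comp_swap_eq_swap_comp {ι : Type*} [DecidableEq ι] [DecidableEq α] {g : ι → α}
    {a b : α} {p q : ι} (hp : g p = a) (hq : ∀ k, g k = b ↔ k = q) {k : ι}
    (hk : g k = a → k = p) : (g ∘ Equiv.swap p q) k = Equiv.swap a b (g k) := by
  have := hq q
  have := hq k
  simp only [Function.comp_apply, Equiv.swap_apply_def]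
  grind

variable [LinearOrder α]

theorem mem_exchangeWords_of_comp_swap {a b : α} (hab : a < b) {g : ℕ → α} {j : ℕ}
    (hlt : g (j + 1) < g j) (hg : g ∘ Equiv.swap j (j + 1) ∈ exchangeWords a b) :
    g ∈ exchangeWords a b := by
  obtain ⟨q, hq, hsub⟩ := hg
  have hq' : ∀ k, g k = b ↔ k = Equiv.swap j (j + 1) q := fun k => by
    simpa only [comp_swap_comp_swap] using comp_swap_eq_iff_of_unique hq j (j + 1) k
  have hbefore : ∀ k < Equiv.swap j (j + 1) q, g k = a → Equiv.swap j (j + 1) k < q := by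
    intro k hk hka
    have hbq := (hq' _).2 rfl
    simpa using swap_succ_lt_swap_succ hk (j := j) (by rintro ⟨rfl, hj⟩; grind)
  refine ⟨_, hq', fun k ⟨hk, hka⟩ l ⟨hl, hla⟩ => (Equiv.swap j (j + 1)).injective ?_⟩
  exact hsub ⟨hbefore k hk hka, by simpa using hka⟩ ⟨hbefore l hl hla, by simpa using hla⟩

theorem comp_swap_lt_iff {a b : α} (hab : a ⋖ b) {g : ℕ → α} {p q j : ℕ}
    (hp : IsLeast {k | g k = a} p) (hq : ∀ k, g k = b ↔ k = q) (hqp : q < p)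
    (hne : ¬(q = j ∧ p = j + 1)) (hj : ¬(p = j ∧ g (j + 1) = a)) :
    ((g ∘ Equiv.swap p q) j < (g ∘ Equiv.swap p q) (j + 1) ↔ g j < g (j + 1)) ∧
      ((g ∘ Equiv.swap p q) (j + 1) < (g ∘ Equiv.swap p q) j ↔ g (j + 1) < g j) := by
  by_cases hpj : p < j
  · simp [Equiv.swap_apply_of_ne_of_ne (show j ≠ p by omega) (show j ≠ q by omega),
      Equiv.swap_apply_of_ne_of_ne (show j + 1 ≠ p by omega) (show j + 1 ≠ q by omega)]
  have hleast : ∀ k, g k = a → p ≤ k := fun k hk => hp.2 hk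
  have hfirst : g j = a → j = p := fun h => by have := hleast j h; omega
  have hfirst' : g (j + 1) = a → j + 1 = p := fun h => by
    have := hleast _ h
    by_contra
    exact hj ⟨by omega, h⟩
  rw [comp_swap_eq_swap_comp hp.1 hq hfirst, comp_swap_eq_swap_comp hp.1 hq hfirst']
  constructor <;> refine swap_lt_swap_iff_of_covBy hab ?_ ?_ <;> rintro ⟨h₁, h₂⟩ <;>
    have := hq j <;> have := hq (j + 1) <;> grind

namespace HeckeRelated

variable {β : R} {a b : α} {A B : (ℕ → α) → R}

theorem heckeStep_eq_mul (h : HeckeRelated β a b A B) (hab : a < b) (x : R) (j : ℕ) {g : ℕ → α}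
    {p q : ℕ} (hp : IsLeast {k | g k = a} p) (hq : ∀ k, g k = b ↔ k = q) (hpq : p < q) :
    heckeStep β x j B g = β * heckeStep β x j A g := by
  have hswap : g (j + 1) < g j →
      B (g ∘ Equiv.swap j (j + 1)) = β * A (g ∘ Equiv.swap j (j + 1)) := by
    intro hlt
    refine h.eq_mul (isLeast_comp_swap_succ hp hlt.ne') (comp_swap_eq_iff_of_unique hq _ _)
      (swap_succ_lt_swap_succ hpq ?_)
    rintro ⟨rfl, rfl⟩
    exact hab.asymm (by rwa [hp.1, (hq _).2 rfl] at hlt)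
  simp only [heckeStep, h.eq_mul hp hq hpq]
  split_ifs with _ hlt hlt <;> first | (rw [hswap hlt]; ring) | ring

theorem heckeStep_eq_swap_of_adjacent (h : HeckeRelated β a b A B) (hab : a < b) (x : R) {j : ℕ}
    {g : ℕ → α} (hp : IsLeast {k | g k = a} (j + 1)) (hq : ∀ k, g k = b ↔ k = j) :
    heckeStep β x j B g = heckeStep β x j A (g ∘ Equiv.swap (j + 1) j) := by
  have hpa : g (j + 1) = a := hp.1
  have hqb : g j = b := (hq j).2 rfl
  have hB : B g = A (g ∘ Equiv.swap j (j + 1)) := by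
    rw [h.eq_swap hp hq (by omega), Equiv.swap_comm]
  have hBswap : B (g ∘ Equiv.swap j (j + 1)) = β * A (g ∘ Equiv.swap j (j + 1)) :=
    h.eq_mul (isLeast_comp_swap_succ hp (by rw [hpa, hqb]; exact hab.ne'))
      (comp_swap_eq_iff_of_unique hq _ _) (by simp)
  simp only [heckeStep, Equiv.swap_comm (j + 1) j, Function.comp_apply, Equiv.swap_apply_left,
    Equiv.swap_apply_right, hpa, hqb, if_pos hab, if_neg hab.asymm, hB, hBswap]
  ring

theorem heckeStep_eq_swap_of_double (h : HeckeRelated β a b A B) (hab : a < b) (x : R) {p q : ℕ}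
    {g : ℕ → α} (hp : IsLeast {k | g k = a} p) (hq : ∀ k, g k = b ↔ k = q) (hqp : q < p)
    (hp' : g (p + 1) = a) :
    heckeStep β x p B g = heckeStep β x p A (g ∘ Equiv.swap p q) := by
  have hpa : g p = a := hp.1
  have hqb : g q = b := (hq q).2 rfl
  have hnext : Equiv.swap p q (p + 1) = p + 1 :=
    Equiv.swap_apply_of_ne_of_ne (by omega) (by omega)
  have hzero : A ((g ∘ Equiv.swap p q) ∘ Equiv.swap p (p + 1)) = 0 := by
    -- In this word both `a`s stand before `b`, which the support condition excludes.
    refine Function.support_subset_iff'.1 h.support_left _ ?_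
    rintro ⟨r, hr, hsub⟩
    obtain rfl : p + 1 = r := (hr _).1 (by simpa using hqb)
    have hqfix : Equiv.swap p (p + 1) q = q :=
      Equiv.swap_apply_of_ne_of_ne (by omega) (by omega)
    exact hqp.ne
      (hsub ⟨by omega, by simpa [hqfix] using hpa⟩ ⟨by omega, by simpa [hnext] using hp'⟩)
  simp [heckeStep, h.eq_swap hp hq hqp, hpa, hp', hqb, hnext, hab, hab.not_gt, hzero]

theorem heckeStep_eq_swap (h : HeckeRelated β a b A B) (hab : a ⋖ b) (x : R) (j : ℕ) {g : ℕ → α}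
    {p q : ℕ} (hp : IsLeast {k | g k = a} p) (hq : ∀ k, g k = b ↔ k = q) (hqp : q < p) :
    heckeStep β x j B g = heckeStep β x j A (g ∘ Equiv.swap p q) := by
  by_cases hadj : q = j ∧ p = j + 1
  · obtain ⟨rfl, rfl⟩ := hadj
    exact h.heckeStep_eq_swap_of_adjacent hab.lt x hp hq
  by_cases hdouble : p = j ∧ g (j + 1) = a
  · obtain ⟨rfl, hp'⟩ := hdouble
    exact h.heckeStep_eq_swap_of_double hab.lt x hp hq hqp hp'
  have hswap : g (j + 1) < g j →
      B (g ∘ Equiv.swap j (j + 1)) = A ((g ∘ Equiv.swap p q) ∘ Equiv.swap j (j + 1)) := by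
    intro hlt
    rw [h.eq_swap (isLeast_comp_swap_succ hp hlt.ne') (comp_swap_eq_iff_of_unique hq _ _)
      (swap_succ_lt_swap_succ hqp hadj), Function.comp_assoc, Function.comp_assoc,
      ← Equiv.Perm.coe_mul, ← Equiv.Perm.coe_mul, Equiv.mul_swap_eq_swap_mul (Equiv.swap j _),
      Equiv.swap_apply_self, Equiv.swap_apply_self]
  obtain ⟨hlt_iff, hgt_iff⟩ := comp_swap_lt_iff hab hp hq hqp hadj hdouble
  simp only [heckeStep, hlt_iff, hgt_iff, h.eq_swap hp hq hqp]
  split_ifs with _ hlt hlt <;> first | rw [hswap hlt] | rfl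

theorem heckeStep (h : HeckeRelated β a b A B) (hab : a ⋖ b) (x : R) (j : ℕ) :
    HeckeRelated β a b (heckeStep β x j A) (heckeStep β x j B) where
  support_left := support_heckeStep_subset
    (fun _ => mem_exchangeWords_of_comp_swap hab.lt) β x h.support_left
  support_right := support_heckeStep_subset
    (fun _ => mem_exchangeWords_of_comp_swap hab.lt) β x h.support_right
  eq_mul := h.heckeStep_eq_mul hab.lt x j
  eq_swap := h.heckeStep_eq_swap hab x j

end HeckeRelated

end LetterExchange

section ChainWords

variable {α : Type*}

/-- The word `g` with the letter `r` inserted at place `k`. -/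
def insertLetter (k : ℕ) (r : α) (g : ℕ → α) : ℕ → α := fun p =>
  if p < k then g p else if p = k then r else g (p - 1)

theorem insertLetter_apply_self (k : ℕ) (r : α) (g : ℕ → α) : insertLetter k r g k = r := by
  simp [insertLetter]

theorem insertLetter_apply_succ (k : ℕ) (r : α) (g : ℕ → α) :
    insertLetter k r g (k + 1) = g k := by
  simp [insertLetter]

theorem insertLetter_succ (k : ℕ) (r : α) (g : ℕ → α) :
    insertLetter (k + 1) r g = insertLetter k r g ∘ Equiv.swap k (k + 1) := by
  funext p
  simp only [insertLetter, Function.comp_apply, Equiv.swap_apply_def]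
  grind

theorem insertLetter_succ_update (k : ℕ) (r : α) (g : ℕ → α) :
    insertLetter (k + 1) (g k) (Function.update g k r) = insertLetter k r g := by
  funext p
  simp only [insertLetter, Function.update_apply]
  grind

variable [Zero α] {N : ℕ}

/-- The word made of the first `m` letters of `o`, followed by `s` and then by zeros only. -/
def chainWord (m : ℕ) (o : ℕ → α) (s : Fin N → α) : ℕ → α := fun p =>
  if p < m then o p else if h : p - m < N then s ⟨p - m, h⟩ else 0

theorem chainWord_apply_of_lt {m p : ℕ} (hp : p < m) (o : ℕ → α) (s : Fin N → α) :
    chainWord m o s p = o p :=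
  if_pos hp

theorem chainWord_apply_add (m : ℕ) (o : ℕ → α) (s : Fin N → α) (j : Fin N) :
    chainWord m o s (m + j) = s j := by
  simp [chainWord]

theorem chainWord_mem_zeroTailWords (m : ℕ) (o : ℕ → α) (s : Fin N → α) :
    chainWord m o s ∈ zeroTailWords α (m + N) := fun p hp => by
  rw [chainWord, if_neg (by omega), dif_neg (by omega)]

theorem chainWord_injective (m : ℕ) (o : ℕ → α) :
    Function.Injective (chainWord m o : (Fin N → α) → ℕ → α) := fun s s' h => by
  funext j
  simpa only [chainWord_apply_add] using congrFun h (m + j)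

theorem chainWord_update (m : ℕ) (o : ℕ → α) (s : Fin N → α) (j : Fin N) (r : α) :
    chainWord m o (Function.update s j r) = Function.update (chainWord m o s) (m + j) r := by
  funext p
  simp only [chainWord, Function.update_apply, Fin.ext_iff]
  grind

theorem insertLetter_chainWord (m : ℕ) (o : ℕ → α) (s : Fin N → α) (c : α) :
    insertLetter m c (chainWord m o s) = chainWord (m + 1) (Function.update o m c) s := by
  funext p
  simp only [insertLetter, chainWord, Function.update_apply]
  grind

theorem insertLetter_zero_chainWord (m : ℕ) (o : ℕ → α) (s : Fin N → α) :
    insertLetter (m + N) 0 (chainWord m o s) = chainWord m o s := by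
  funext p
  simp only [insertLetter, chainWord]
  grind

theorem chainWord_zero_comp_swap (o : ℕ → α) (s : Fin N → α) (i j : Fin N) :
    chainWord 0 o (s ∘ Equiv.swap i j) = chainWord 0 o s ∘ Equiv.swap (i : ℕ) j := by
  funext p
  simp only [chainWord, Function.comp_apply, Equiv.swap_apply_def, Fin.ext_iff]
  by_cases hi : p = i
  · simp [hi]
  · by_cases hj : p = j
    · subst hj
      simp [hi]
    · simp [hi, hj]

theorem chainWord_comp_swap {m i j : ℕ} (hi : i < m) (hj : j < m) (o : ℕ → α) (s : Fin N → α) :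
    chainWord m (o ∘ Equiv.swap i j) s = chainWord m o s ∘ Equiv.swap i j := by
  funext p
  simp only [chainWord, Function.comp_apply, Equiv.swap_apply_def]
  grind

theorem chainWord_zero_eq_iff_of_lt (o : ℕ → α) {w : Fin N → α} {a : α} {P Q : Fin N}
    (hP : ∀ k < Q, w k = a ↔ k = P) : ∀ k < (Q : ℕ), chainWord 0 o w k = a ↔ k = P := by
  intro k hk
  simpa [chainWord, hk.trans Q.isLt, Fin.ext_iff] using hP ⟨k, hk.trans Q.isLt⟩ hk

theorem chainWord_zero_eq_iff (o : ℕ → α) {w : Fin N → α} {b : α} (hb : b ≠ 0) {Q : Fin N}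
    (hQ : ∀ k, w k = b ↔ k = Q) (k : ℕ) : chainWord 0 o w k = b ↔ k = Q := by
  by_cases hk : k < N
  · simpa [chainWord, hk, Fin.ext_iff] using hQ ⟨k, hk⟩
  · simp only [chainWord, Nat.not_lt_zero, if_false, Nat.sub_zero, hk, dif_neg, not_false_eq_true]
    exact iff_of_false hb.symm (by omega)

theorem HeckeRelated.apply_chainWord {R : Type*} [CommRing R] {β : R} {a b : α}
    {A B : (ℕ → α) → R} (h : HeckeRelated β a b A B) (hab : a ≠ b) {d : ℕ} {o : ℕ → α}
    (ho : ∀ k < d, o k ≠ a) (s : Fin N → α) :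
    B (chainWord (d + 2) (Function.update (Function.update o d b) (d + 1) a) s) =
      A (chainWord (d + 2) (Function.update (Function.update o d a) (d + 1) b) s) := by
  set o' := Function.update (Function.update o d b) (d + 1) a
  have hlt : ∀ k < d + 2, chainWord (d + 2) o' s k = o' k := fun k hk =>
    chainWord_apply_of_lt hk o' s
  have hleast : IsLeast {k | chainWord (d + 2) o' s k = a} (d + 1) := by
    refine ⟨(hlt _ (by omega)).trans (by simp [o']), fun k hk => not_lt.1 fun hkd => ?_⟩
    rw [Set.mem_ofPred_eq, hlt k (by omega)] at hk
    rcases Nat.lt_succ_iff_lt_or_eq.1 hkd with hkd' | rfl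
    · exact ho k hkd' (by simpa [o', hkd.ne, hkd'.ne] using hk)
    · exact hab (by simpa [o'] using hk.symm)
  have hswap : Function.update (Function.update o d a) (d + 1) b =
      o' ∘ Equiv.swap d (d + 1) := by
    funext k
    simp only [o', Function.comp_apply, Function.update_apply, Equiv.swap_apply_def]
    grind
  rw [h.apply_eq_apply_comp_swap ((hlt d (by omega)).trans (by simp [o'])) hleast, hswap,
    chainWord_comp_swap (by omega) (by omega)]

end ChainWords

section Monodromy

variable [Field F] {n N : ℕ}

theorem Rsite_apply (β u τ : F) (j : Fin N) (x : Fin n × (Fin N → Fin n)) (r : Fin n)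
    (s : Fin N → Fin n) :
    Rsite n N β u τ j x (r, s) =
      (if x = (s j, Function.update s j r) then if r < s j then 1 + β * om β u τ else 1 else 0) +
        if x = (r, s) then if s j < r then om β u τ else 0 else 0 := by
  obtain ⟨r', s'⟩ := x
  have hs : s' = s ↔ s' j = s j ∧ ∀ k, k ≠ j → s' k = s k := by
    rw [← Function.eq_update_iff, Function.update_eq_self]
  simp only [Rsite, Rmat, Matrix.of_apply, Prod.mk.injEq, Function.eq_update_iff, hs]
  by_cases h : ∀ k, k ≠ j → s' k = s k <;> grind

theorem vecMul_Rsite (β u τ : F) (j : Fin N) (v : Fin n × (Fin N → Fin n) → F) (r : Fin n)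
    (s : Fin N → Fin n) :
    Matrix.vecMul v (Rsite n N β u τ j) (r, s) =
      v (s j, Function.update s j r) * (if r < s j then 1 + β * om β u τ else 1) +
        if s j < r then om β u τ * v (r, s) else 0 := by
  simp only [Matrix.vecMul, dotProduct, Rsite_apply, mul_add, Finset.sum_add_distrib, mul_ite,
    mul_zero, Finset.sum_ite_eq', Finset.mem_univ, if_true, mul_comm (om β u τ)]

variable [NeZero n]

theorem vecMul_insertLetter_Rsite (β u τ : F) (m : ℕ) (o : ℕ → Fin n) (j : Fin N)
    (Ψ : (ℕ → Fin n) → F) :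
    Matrix.vecMul (fun x => Ψ (insertLetter (m + j + 1) x.1 (chainWord m o x.2)))
        (Rsite n N β u τ j) =
      fun x => heckeStep β (om β u τ) (m + j) Ψ (insertLetter (m + j) x.1 (chainWord m o x.2)) := by
  funext ⟨r, s⟩
  have hpass : insertLetter (m + j + 1) (s j) (chainWord m o (Function.update s j r)) =
      insertLetter (m + j) r (chainWord m o s) := by
    rw [chainWord_update, ← chainWord_apply_add m o s j, insertLetter_succ_update]
  rw [vecMul_Rsite, hpass]
  simp only [heckeStep, insertLetter_apply_self, insertLetter_apply_succ, chainWord_apply_add,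
    insertLetter_succ]

theorem vecMul_insertLetter_Tmono (β u : F) (t : Fin N → F) (m : ℕ) (o : ℕ → Fin n)
    (Ψ : (ℕ → Fin n) → F) :
    Matrix.vecMul (fun x => Ψ (insertLetter (m + N) x.1 (chainWord m o x.2))) (Tmono n N β u t) =
      fun x => heckeRow β m N (fun i => om β u (t i)) Ψ
        (insertLetter m x.1 (chainWord m o x.2)) := by
  have partial_monodromy : ∀ (j : ℕ) (hj : j ≤ N) (Ψ : (ℕ → Fin n) → F),
      Matrix.vecMul (fun x => Ψ (insertLetter (m + j) x.1 (chainWord m o x.2)))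
          (List.ofFn fun i : Fin j =>
            Rsite n N β u (t (i.castLE hj)) (i.castLE hj)).reverse.prod =
        fun x => heckeRow β m j (fun i => om β u (t (i.castLE hj))) Ψ
          (insertLetter m x.1 (chainWord m o x.2)) := by
    intro j
    induction j with
    | zero => intro _ Ψ; simp [heckeRow]
    | succ j ih =>
      intro hj Ψ
      rw [List.ofFn_succ', List.concat_eq_append, List.reverse_append, List.reverse_singleton,
        List.singleton_append, List.prod_cons, ← Matrix.vecMul_vecMul]
      exact (congrArg (Matrix.vecMul · _)
        (vecMul_insertLetter_Rsite β u _ m o ((Fin.last j).castLE hj) Ψ)).trans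
          (ih (by omega) _)
  exact partial_monodromy N le_rfl Ψ

theorem vecMul_blockOp (β u : F) (t : Fin N → F) (m : ℕ) (o : ℕ → Fin n) (c : Fin n)
    {Ψ : (ℕ → Fin n) → F} (hΨ : Function.support Ψ ⊆ zeroTailWords (Fin n) (m + N)) :
    Matrix.vecMul (fun s => Ψ (chainWord m o s)) (blockOp n N β u t 0 c) =
      fun s => heckeRow β m N (fun i => om β u (t i)) Ψ
        (chainWord (m + 1) (Function.update o m c) s) := by
  funext s
  have hzero : ∀ r ≠ 0, ∀ s' : Fin N → Fin n,
      Ψ (insertLetter (m + N) r (chainWord m o s')) = 0 := by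
    intro r hr s'
    refine Function.support_subset_iff'.1 hΨ _ fun htail => hr ?_
    simpa only [insertLetter_apply_self] using htail (m + N) le_rfl
  rw [← insertLetter_chainWord]
  refine Eq.trans ?_ (congrFun (vecMul_insertLetter_Tmono β u t m o Ψ) (c, s))
  simp only [Matrix.vecMul, dotProduct, blockOp, Matrix.of_apply]
  rw [Fintype.sum_prod_type, Fintype.sum_eq_single (0 : Fin n)]
  · simp only [insertLetter_zero_chainWord]
  · intro r hr
    simp only [hzero r hr, zero_mul, Finset.sum_const_zero]

theorem vecMul_blockOp_prod (β : F) (t : Fin N → F) {m : ℕ} (σ : Fin m → F) (o : ℕ → Fin n)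
    {Ψ : (ℕ → Fin n) → F} (hΨ : Function.support Ψ ⊆ zeroTailWords (Fin n) N) :
    Matrix.vecMul (fun s => Ψ (chainWord 0 o s))
        (List.ofFn fun k : Fin m => blockOp n N β (σ k) t 0 (o k)).prod =
      fun s => heckeRows β m (fun k i => om β (σ k) (t i)) Ψ (chainWord m o s) := by
  induction m with
  | zero => simp [heckeRows]
  | succ m ih =>
    rw [List.ofFn_succ', List.concat_eq_append, List.prod_append, List.prod_singleton,
      ← Matrix.vecMul_vecMul]
    refine (congrArg (Matrix.vecMul · _) (ih fun k => σ k.castSucc)).trans ?_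
    rw [vecMul_blockOp β _ t m o _ (support_heckeRows_subset_zeroTailWords β _ hΨ)]
    simp [heckeRows]

theorem ket_eq_indicator_chainWord (w : Fin N → Fin n) (o : ℕ → Fin n) :
    ket (F := F) n N w = fun s => Set.indicator {chainWord 0 o w} 1 (chainWord 0 o s) := by
  classical
  funext s
  simp [ket, Set.indicator_apply, (chainWord_injective 0 o).eq_iff]

theorem support_indicator_chainWord_subset (w : Fin N → Fin n) (o : ℕ → Fin n) :
    Function.support (Set.indicator {chainWord 0 o w} 1 : (ℕ → Fin n) → F) ⊆
      zeroTailWords (Fin n) N :=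
  Set.support_indicator_subset.trans
    (Set.singleton_subset_iff.2 (by simpa using chainWord_mem_zeroTailWords 0 o w))

theorem vecMul_mul_blockOp_mul_blockOp (β : F) (t : Fin N → F) {d : ℕ} (σ : Fin d → F) (u v : F)
    (o : ℕ → Fin n) (c c' : Fin n) {Ψ : (ℕ → Fin n) → F}
    (hΨ : Function.support Ψ ⊆ zeroTailWords (Fin n) N) :
    Matrix.vecMul (fun s => Ψ (chainWord 0 o s))
        ((List.ofFn fun k : Fin d => blockOp n N β (σ k) t 0 (o k)).prod *
          blockOp n N β u t 0 c * blockOp n N β v t 0 c') =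
      fun s => heckeRow β (d + 1) N (fun i => om β v (t i))
        (heckeRow β d N (fun i => om β u (t i)) (heckeRows β d (fun k i => om β (σ k) (t i)) Ψ))
        (chainWord (d + 2) (Function.update (Function.update o d c) (d + 1) c') s) := by
  have hrows := support_heckeRows_subset_zeroTailWords β (fun k i => om β (σ k) (t i)) hΨ
  have hrow := support_heckeRow_subset_zeroTailWords β (m := d) (K := d + 1 + N) (by omega)
    (fun i => om β u (t i)) (hrows.trans (zeroTailWords_mono (by omega)))
  rw [← Matrix.vecMul_vecMul, ← Matrix.vecMul_vecMul, vecMul_blockOp_prod β t σ o hΨ,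
    vecMul_blockOp β u t d o c hrows, vecMul_blockOp β v t (d + 1) _ c' hrow]

theorem vecMul_ket_mul_blockOp_exchange (β : F) (t : Fin N → F) {d : ℕ} (σ : Fin d → F) (u v : F)
    {a b : Fin n} (hab : a ⋖ b) {w : Fin N → Fin n} {P Q : Fin N} (hPQ : P < Q)
    (hP : ∀ k < Q, w k = a ↔ k = P) (hQ : ∀ k, w k = b ↔ k = Q) (o : ℕ → Fin n)
    (ho : ∀ k < d, o k ≠ a) :
    Matrix.vecMul (ket n N (w ∘ Equiv.swap P Q) + β • ket n N w)
        ((List.ofFn fun k : Fin d => blockOp n N β (σ k) t 0 (o k)).prod *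
          blockOp n N β u t 0 b * blockOp n N β v t 0 a) =
      Matrix.vecMul (ket n N w)
        ((List.ofFn fun k : Fin d => blockOp n N β (σ k) t 0 (o k)).prod *
          blockOp n N β u t 0 a * blockOp n N β v t 0 b) := by
  set A : (ℕ → Fin n) → F := Set.indicator {chainWord 0 o w} 1
  set B : (ℕ → Fin n) → F := Set.indicator {chainWord 0 o (w ∘ Equiv.swap P Q)} 1 + β • A
  have hrel : HeckeRelated β a b A B := by
    simpa only [A, B, chainWord_zero_comp_swap] using HeckeRelated.indicator β hPQ
      (chainWord_zero_eq_iff_of_lt o hP)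
      (chainWord_zero_eq_iff o (a.zero_le.trans_lt hab.lt).ne' hQ)
  have hsuppA : Function.support A ⊆ zeroTailWords (Fin n) N :=
    support_indicator_chainWord_subset w o
  have hsuppB : Function.support B ⊆ zeroTailWords (Fin n) N :=
    (Function.support_add _ _).trans <| Set.union_subset
      (support_indicator_chainWord_subset _ o)
      ((Function.support_const_smul_subset β A).trans hsuppA)
  have hketA : ket n N w = fun s => A (chainWord 0 o s) := ket_eq_indicator_chainWord w o
  have hketB : ket n N (w ∘ Equiv.swap P Q) + β • ket n N w = fun s => B (chainWord 0 o s) := by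
    rw [hketA, ket_eq_indicator_chainWord _ o]
    rfl
  have hstep : ∀ x j Φ Ψ, HeckeRelated β a b Φ Ψ →
      HeckeRelated β a b (heckeStep β x j Φ) (heckeStep β x j Ψ) :=
    fun x j _ _ h => h.heckeStep hab x j
  rw [hketB, hketA, vecMul_mul_blockOp_mul_blockOp β t σ u v o a b hsuppA,
    vecMul_mul_blockOp_mul_blockOp β t σ u v o b a hsuppB]
  funext s
  exact HeckeRelated.apply_chainWord
    (heckeRow_rel hstep _ _ (heckeRow_rel hstep _ _ (heckeRows_rel hstep _ hrel))) hab.ne ho s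

end Monodromy

theorem bra_exchange_general [Field F] (M : ℕ) (β : F) (σ t : Fin (M + 2) → F)
    (_ht : ∀ i, 1 + β * t i ≠ 0) {a b : Fin (M + 2)} (hab : a ⋖ b) (π : Equiv.Perm (Fin (M + 2)))
    (hlen : permLength π < permLength (Equiv.swap a b * π)) :
    Matrix.vecMul
        (ket (M + 2) (M + 2) (fun j => (Equiv.swap a b * π) j) +
          β • ket (M + 2) (M + 2) fun j => π j)
        (topString M β t σ (M - (a : ℕ)) (by omega) *
          blockOp (M + 2) (M + 2) β (σ ⟨M - (a : ℕ), by omega⟩) t 0 b *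
          blockOp (M + 2) (M + 2) β (σ ⟨M + 1 - (a : ℕ), by omega⟩) t 0 a) =
      Matrix.vecMul (ket (M + 2) (M + 2) fun j => π j)
        (topString M β t σ (M - (a : ℕ)) (by omega) *
          blockOp (M + 2) (M + 2) β (σ ⟨M - (a : ℕ), by omega⟩) t 0 a *
          blockOp (M + 2) (M + 2) β (σ ⟨M + 1 - (a : ℕ), by omega⟩) t 0 b) := by
  have hswap : (fun j => (Equiv.swap a b * π) j) =
      π ∘ Equiv.swap (π.symm a) (π.symm b) := by
    rw [← Equiv.Perm.coe_mul, Equiv.mul_swap_eq_swap_mul, Equiv.apply_symm_apply,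
      Equiv.apply_symm_apply]
  rw [hswap]
  exact vecMul_ket_mul_blockOp_exchange β t (d := M - a) (fun k => σ ⟨k, by omega⟩) _ _ hab
    (symm_lt_symm_of_permLength_lt hab hlen) (fun _ _ => π.eq_symm_apply.symm)
    (fun _ => π.eq_symm_apply.symm) (fun k => ⟨M + 1 - k, by omega⟩) fun k hk =>
      Fin.ne_of_val_ne (show M + 1 - k ≠ a by omega)

/-- **Lemma `l3`**: with `n = N = M+2` and `1 ≤ i ≤ N-1` (`i = ii+1`), if
`ℓ(s_i π) > ℓ(π)` (where `s_i` exchanges the letters `i-1` and `i` of the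
`0`-based alphabet), then
`(⟨s_iπ| + β⟨π|) B_{N-1}(σ_1) ⋯ B_{i+1}(σ_{N-i-1}) B_i(σ_{N-i}) B_{i-1}(σ_{N-i+1})
 = ⟨π| B_{N-1}(σ_1) ⋯ B_{i+1}(σ_{N-i-1}) B_{i-1}(σ_{N-i}) B_i(σ_{N-i+1})`. -/
theorem bra_exchange [Field F] [CharZero F] (M : ℕ) (β : F)
    (σ t : Fin (M + 2) → F)
    (hind : AlgebraicIndependent ℚ
      (Sum.elim (fun _ : Unit => β) (Sum.elim σ t)))
    (ii : Fin (M + 1)) (π : Equiv.Perm (Fin (M + 2)))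
    (hlen : permLength π < permLength (Equiv.swap ii.castSucc ii.succ * π)) :
    Matrix.vecMul
        (ket (M + 2) (M + 2) (fun j => (Equiv.swap ii.castSucc ii.succ * π) j) +
          β • ket (M + 2) (M + 2) fun j => π j)
        (topString M β t σ (M - (ii : ℕ)) (by omega) *
          blockOp (M + 2) (M + 2) β (σ ⟨M - (ii : ℕ), by omega⟩) t 0 ii.succ *
          blockOp (M + 2) (M + 2) β (σ ⟨M + 1 - (ii : ℕ), by omega⟩) t 0 ii.castSucc) =
      Matrix.vecMul (ket (M + 2) (M + 2) fun j => π j)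
        (topString M β t σ (M - (ii : ℕ)) (by omega) *
          blockOp (M + 2) (M + 2) β (σ ⟨M - (ii : ℕ), by omega⟩) t 0 ii.castSucc *
          blockOp (M + 2) (M + 2) β (σ ⟨M + 1 - (ii : ℕ), by omega⟩) t 0 ii.succ) :=
  bra_exchange_general M β σ t
    (fun i => one_add_mul_ne_zero_of_algebraicIndependent hind (.inl ()) (.inr (.inr i)))
    (Fin.covBy_iff.2 (by simp)) π hlen
end
end
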